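/- Let r > 0, σ > 0, γ ∈ [1/2, 1), S₀ > 0, T > 0 and x ≥ 0, and define f : [0, T] → ℝ by f(t) = (S₀^{1−γ} + (xσ/r)(1 − e^{−r(1−γ)t}))^{1/(1−γ)}. Suppose g : [0, T] → ℝ is continuous and nonnegative and satisfies the integral inequality g(t) ≥ S₀ + ∫₀ᵗ x σ e^{−r(1−γ)s} g(s)^γ ds for every t ∈ [0, T]. Then g(t) ≥ f(t) for every t ∈ [0, T]. In other words, f is a lower bound for any continuous nonnegative function dominating its own integral transform, in particular for the mean t ↦ E_{Q₁}[X_t] of the CEV diffusion under the tilted measure. -/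

import Mathlib

/-- Comparison/Grönwall-type lower bound: with `x ≥ 0`, the
explicit solution `f(t) = (S₀^{1−γ} + (xσ/r)(1 − e^{−r(1−γ)t}))^{1/(1−γ)}` of the
CEV mean equation is a lower bound for every continuous nonnegative `g` on `[0, T]`
satisfying `g(t) ≥ S₀ + ∫₀ᵗ xσ e^{−r(1−γ)s} g(s)^γ ds` — in particular for
`t ↦ E_{Q₁}[X_t]` of the CEV diffusion under the tilted measure. -/
theorem stmt_15 (r σ γ S₀ T x : ℝ) (hr : 0 < r) (hσ : 0 < σ)
    (hγ : γ ∈ Set.Ico (1 / 2 : ℝ) 1) (hS₀ : 0 < S₀) (hT : 0 < T) (hx : 0 ≤ x)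
    (f : ℝ → ℝ)
    (hf : f = fun t =>
      (S₀ ^ (1 - γ) + x * σ / r * (1 - Real.exp (-r * (1 - γ) * t))) ^ (1 / (1 - γ)))
    (g : ℝ → ℝ) (hgc : ContinuousOn g (Set.Icc (0 : ℝ) T))
    (hgnonneg : ∀ t ∈ Set.Icc (0 : ℝ) T, 0 ≤ g t)
    (hineq : ∀ t ∈ Set.Icc (0 : ℝ) T,
      S₀ + ∫ s in (0 : ℝ)..t, x * σ * Real.exp (-r * (1 - γ) * s) * g s ^ γ ≤ g t) :
    ∀ t ∈ Set.Icc (0 : ℝ) T, f t ≤ g t := by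
  obtain ⟨hγ1, hγ2⟩ := hγ
  have hγ0 : 0 ≤ γ := by linarith
  have h1γ : 0 < 1 - γ := by linarith
  set k : ℝ → ℝ := fun s => x * σ * Real.exp (-r * (1 - γ) * s) * g s ^ γ with hk
  have hkc : ContinuousOn k (Set.Icc 0 T) := by
    apply ContinuousOn.mul
    · fun_prop
    · exact hgc.rpow_const (fun _ _ => Or.inr hγ0)
  have hknn : ∀ s ∈ Set.Icc (0 : ℝ) T, 0 ≤ k s := fun s hs => by
    have := Real.rpow_nonneg (hgnonneg s hs) γ
    simp only [hk]; positivity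
  set h : ℝ → ℝ := fun t => S₀ + ∫ s in (0 : ℝ)..t, k s with hh
  have hhS : ∀ t ∈ Set.Icc (0 : ℝ) T, S₀ ≤ h t := fun t ht => by
    have : 0 ≤ ∫ s in (0 : ℝ)..t, k s :=
      intervalIntegral.integral_nonneg ht.1 (fun s hs => hknn s ⟨hs.1, hs.2.trans ht.2⟩)
    simp only [hh]; linarith
  have hhg : ∀ t ∈ Set.Icc (0 : ℝ) T, h t ≤ g t := hineq
  have hhc : ContinuousOn h (Set.Icc 0 T) := by
    have := intervalIntegral.continuousOn_primitive_interval (μ := MeasureTheory.volume)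
      (f := k) (a := 0) (b := T) (by
        rw [Set.uIcc_of_le hT.le]
        exact hkc.integrableOn_Icc)
    rw [Set.uIcc_of_le hT.le] at this
    exact continuousOn_const.add this
  have hhd : ∀ t ∈ Set.Ioo (0 : ℝ) T, HasDerivAt h (k t) t := fun t ht => by
    refine HasDerivAt.const_add S₀ ?_
    have hn : Set.Icc (0 : ℝ) T ∈ nhds t := Icc_mem_nhds ht.1 ht.2
    refine intervalIntegral.integral_hasDerivAt_right ?_ ?_ (hkc.continuousAt hn)
    · apply ContinuousOn.intervalIntegrable
      rw [Set.uIcc_of_le ht.1.le]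
      exact hkc.mono (Set.Icc_subset_Icc_right ht.2.le)
    · exact ⟨_, hn, hkc.aestronglyMeasurable measurableSet_Icc⟩
  set φ : ℝ → ℝ := fun t =>
    h t ^ (1 - γ) - x * σ / r * (1 - Real.exp (-r * (1 - γ) * t)) with hφ
  have hφd : ∀ t ∈ Set.Ioo (0 : ℝ) T, HasDerivAt φ
      (k t * (1 - γ) * h t ^ (1 - γ - 1) -
        x * σ * (1 - γ) * Real.exp (-r * (1 - γ) * t)) t := fun t ht => by
    have hpos : 0 < h t := hS₀.trans_le (hhS t ⟨ht.1.le, ht.2.le⟩)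
    have h1 := (hhd t ht).rpow_const (p := 1 - γ) (Or.inl hpos.ne')
    have h2 : HasDerivAt (fun t => x * σ / r * (1 - Real.exp (-r * (1 - γ) * t)))
        (x * σ / r * (-(Real.exp (-r * (1 - γ) * t) * (-r * (1 - γ) * 1)))) t :=
      ((((hasDerivAt_id t).const_mul (-r * (1 - γ))).exp).const_sub 1).const_mul _
    have h3 : x * σ / r * (-(Real.exp (-r * (1 - γ) * t) * (-r * (1 - γ) * 1))) =
        x * σ * (1 - γ) * Real.exp (-r * (1 - γ) * t) := by
      generalize Real.exp (-r * (1 - γ) * t) = E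
      field_simp
    rw [h3] at h2
    exact h1.sub h2
  have hmono : MonotoneOn φ (Set.Icc 0 T) := by
    apply monotoneOn_of_deriv_nonneg (convex_Icc 0 T)
    · refine (hhc.rpow_const (fun _ _ => Or.inr h1γ.le)).sub ?_
      fun_prop
    · rw [interior_Icc]
      exact fun t ht => (hφd t ht).differentiableAt.differentiableWithinAt
    · rw [interior_Icc]
      intro t ht
      have ht' : t ∈ Set.Icc (0 : ℝ) T := ⟨ht.1.le, ht.2.le⟩
      have hpos : 0 < h t := hS₀.trans_le (hhS t ht')
      rw [(hφd t ht).deriv]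
      have e1 : h t ^ γ ≤ g t ^ γ := Real.rpow_le_rpow hpos.le (hhg t ht') hγ0
      have e2 : h t ^ γ * h t ^ (1 - γ - 1) = 1 := by
        rw [← Real.rpow_add hpos]; simp
      have e3 : 1 ≤ g t ^ γ * h t ^ (1 - γ - 1) :=
        e2.symm.le.trans (mul_le_mul_of_nonneg_right e1 (Real.rpow_nonneg hpos.le _))
      have e4 : 0 ≤ x * σ * (1 - γ) * Real.exp (-r * (1 - γ) * t) := by positivity
      have := mul_le_mul_of_nonneg_left e3 e4
      simp only [hk]
      linarith
  intro t ht
  have hpos : 0 < h t := hS₀.trans_le (hhS t ht)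
  have hm := hmono (Set.left_mem_Icc.2 hT.le) ht ht.1
  have h0 : φ 0 = S₀ ^ (1 - γ) := by simp [hφ, hh]
  rw [h0] at hm
  have hle : S₀ ^ (1 - γ) + x * σ / r * (1 - Real.exp (-r * (1 - γ) * t)) ≤ h t ^ (1 - γ) := by
    simp only [hφ] at hm
    linarith
  have hE : Real.exp (-r * (1 - γ) * t) ≤ 1 := by
    rw [Real.exp_le_one_iff]
    have : 0 ≤ r * (1 - γ) * t := mul_nonneg (by positivity) ht.1
    linarith
  have hnn : 0 ≤ S₀ ^ (1 - γ) + x * σ / r * (1 - Real.exp (-r * (1 - γ) * t)) := by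
    have : 0 ≤ 1 - Real.exp (-r * (1 - γ) * t) := by linarith
    positivity
  rw [hf]
  calc _ ≤ (h t ^ (1 - γ)) ^ (1 / (1 - γ)) := Real.rpow_le_rpow hnn hle (by positivity)
    _ = h t := by
      rw [← Real.rpow_mul hpos.le, mul_one_div_cancel h1γ.ne', Real.rpow_one]
    _ ≤ g t := hhg t ht
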